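/- For lazy random walk on a finite connected graph with n ≥ 2 vertices, the maximum expected hitting time satisfies t_hit ≤ 20 (d_avg/d_min) n √(t_rel + 1). -/

import Mathlib

open Finset

variable {V : Type*}

noncomputable def pip [Fintype V] (pi f g : V → ℝ) : ℝ := ∑ x, pi x * f x * g x

noncomputable def secondEig [Fintype V] (pi : V → ℝ) (P : Matrix V V ℝ) : ℝ :=
  sSup {r : ℝ | ∃ f : V → ℝ, pip pi f f = 1 ∧ (∑ x, pi x * f x) = 0 ∧ r = pip pi f (P.mulVec f)}

noncomputable def trelT [Fintype V] (pi : V → ℝ) (P : Matrix V V ℝ) : ℝ := 1 / (1 - secondEig pi P)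

noncomputable def Dmat [Fintype V] [DecidableEq V] (h : V) : Matrix V V ℝ :=
  Matrix.diagonal fun y => if y = h then 0 else 1

noncomputable def opNorm [Fintype V] (pi : V → ℝ) (A : Matrix V V ℝ) : ℝ :=
  sSup {r : ℝ | ∃ f : V → ℝ, pip pi f f ≤ 1 ∧ r = Real.sqrt (pip pi (A.mulVec f) (A.mulVec f))}

/-- probability, starting at `y`, that the chain avoids `x` during steps `0..t`
(i.e. `P_y(τ_x > t)`), written as a sum over length-`t` paths. -/
noncomputable def survProb [Fintype V] [DecidableEq V] (P : Matrix V V ℝ) (x y : V) (t : ℕ) : ℝ :=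
  ∑ p : Fin (t+1) → V,
    if p 0 = y ∧ (∀ s, p s ≠ x) then ∏ s : Fin t, P (p s.castSucc) (p s.succ) else 0

/-- `Ehit P x y = E_y[τ_x]`, via `E[τ] = ∑_t P(τ > t)`. -/
noncomputable def Ehit [Fintype V] [DecidableEq V] (P : Matrix V V ℝ) (x y : V) : ℝ :=
  ∑' t : ℕ, survProb P x y t

noncomputable def thit [Fintype V] [DecidableEq V] (P : Matrix V V ℝ) : ℝ :=
  ⨆ q : V × V, Ehit P q.1 q.2

/-- expected hitting time of `x` when the initial state has law `μ`. -/
noncomputable def EhitFrom [Fintype V] [DecidableEq V] (P : Matrix V V ℝ) (μ : V → ℝ) (x : V) : ℝ :=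
  ∑' t : ℕ, ∑ y, μ y * survProb P x y t

/-- probability, starting from `pi`, that `X_s ≠ h s` for all `0 ≤ s ≤ t`. -/
noncomputable def avoidProb [Fintype V] [DecidableEq V] (pi : V → ℝ) (P : Matrix V V ℝ)
    (t : ℕ) (h : Fin (t+1) → V) : ℝ :=
  ∑ p : Fin (t+1) → V,
    if ∀ s, p s ≠ h s then pi (p 0) * ∏ s : Fin t, P (p s.castSucc) (p s.succ) else 0

/-- expected number of visits to `x` strictly before hitting `A`, started at `x`. -/
noncomputable def visitsBeforeHit [Fintype V] [DecidableEq V] (P : Matrix V V ℝ)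
    (A : Finset V) (x : V) : ℝ :=
  ∑' t : ℕ, ∑ p : Fin (t+1) → V,
    if p 0 = x ∧ p (Fin.last t) = x ∧ (∀ s, p s ∉ A) then
      ∏ s : Fin t, P (p s.castSucc) (p s.succ) else 0

noncomputable def lazyP [Fintype V] [DecidableEq V] (G : SimpleGraph V) [DecidableRel G.Adj] :
    Matrix V V ℝ :=
  Matrix.of fun x y => if x = y then 1/2 else if G.Adj x y then 1/(2 * (G.degree x : ℝ)) else 0

noncomputable def lazyPi [Fintype V] [DecidableEq V] (G : SimpleGraph V) [DecidableRel G.Adj] :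
    V → ℝ :=
  fun x => (G.degree x : ℝ) / ∑ v, (G.degree v : ℝ)

noncomputable def dminR [Fintype V] [Nonempty V] [DecidableEq V] (G : SimpleGraph V)
    [DecidableRel G.Adj] : ℝ :=
  Finset.univ.inf' Finset.univ_nonempty fun v => (G.degree v : ℝ)

noncomputable def davgR [Fintype V] [DecidableEq V] (G : SimpleGraph V) [DecidableRel G.Adj] : ℝ :=
  (∑ v, (G.degree v : ℝ)) / Fintype.card V

noncomputable def Pstar [Fintype V] [DecidableEq V] (pi : V → ℝ) (γ : ℝ) : Matrix V V ℝ :=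
  Matrix.of fun x y => (1 - γ) * (if x = y then 1 else 0) + γ * pi y

/-!
Let `𝓔` be the Dirichlet form of a stationary chain. The expected hitting time `h` of `x` vanishes
at `x` and satisfies `h = 1 + P h` elsewhere, so `𝓔(h) ≤ π(h)`. If `‖g‖_∞² ≤ K 𝓔(g)` for every
centred `g`, then applying this to `h - π(h)` at `x` gives `π(h)² ≤ K π(h)`, and applying it
elsewhere gives `h ≤ 2 K`.

It remains to bound the values of a centred `g` on a graph of minimum degree `δ` by its energy
`Q = ∑_{u ∼ w} (g u - g w)²` over ordered pairs, which for the lazy walk is `4 (∑ deg) 𝓔(g)`.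
Averaging over the neighbours of a vertex gives `δ g(x)² ≤ 2 (∑ g² + Q)`. Since `g` takes both signs
or vanishes, a discrete Agmon inequality along a geodesic from `x` to a point `z` with
`g(x) g(z) ≤ 0` gives `δ g(x)⁴ ≤ 8 Q (3 ∑ g² + Q)`, the factor `3` being the maximal number of
neighbours a vertex has on a geodesic. Bounding `∑ g²` by the Poincaré inequality
`4 δ ∑ g² ≤ t_rel Q`, the first estimate when `√(t_rel + 1) ≤ 4 δ` and the second otherwise yield
`δ g(x)² ≤ (5/2) √(t_rel + 1) Q`, that is `K = 10 (∑ deg) √(t_rel + 1) / δ`.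
-/

open Matrix

section HittingTime

variable [Fintype V] [DecidableEq V] {P : Matrix V V ℝ}

lemma survProb_nonneg (hP : ∀ x y, 0 ≤ P x y) (x y : V) (t : ℕ) : 0 ≤ survProb P x y t :=
  sum_nonneg fun _ _ => by
    split_ifs
    exacts [prod_nonneg fun _ _ => hP _ _, le_rfl]

lemma survProb_self (P : Matrix V V ℝ) (x : V) (t : ℕ) : survProb P x x t = 0 :=
  sum_eq_zero fun _ _ => if_neg fun h => h.2 0 h.1

lemma survProb_zero (P : Matrix V V ℝ) {x y : V} (hyx : y ≠ x) : survProb P x y 0 = 1 := by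
  rw [survProb, Fintype.sum_eq_single fun _ => y]
  · simp [hyx]
  · intro p hp
    refine if_neg fun h => hp (funext fun i => ?_)
    rw [Fin.fin_one_eq_zero i, h.1]

lemma survProb_succ (P : Matrix V V ℝ) {x y : V} (hyx : y ≠ x) (t : ℕ) :
    survProb P x y (t + 1) = (P *ᵥ fun z => survProb P x z t) y := by
  have first_step : survProb P x y (t + 1) = ∑ q : Fin (t + 1) → V,
      if ∀ s, q s ≠ x then P y (q 0) * ∏ s : Fin t, P (q s.castSucc) (q s.succ) else 0 := by
    rw [survProb, ← (Fin.consEquiv fun _ : Fin (t + 2) => V).sum_comp, Fintype.sum_prod_type,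
      Fintype.sum_eq_single y]
    · refine sum_congr rfl fun q _ => ?_
      simp only [Fin.consEquiv_apply, Fin.forall_fin_succ (n := t + 1), Fin.cons_zero,
        Fin.cons_succ, Fin.prod_univ_succ (n := t), Fin.castSucc_zero, ← Fin.succ_castSucc]
      simp [hyx]
    · intro a ha
      exact sum_eq_zero fun q _ => by simp [Fin.consEquiv_apply, ha]
  rw [first_step]
  simp only [mulVec, dotProduct, survProb, mul_sum]
  rw [sum_comm]
  refine sum_congr rfl fun q _ => ?_
  rw [Fintype.sum_eq_single (q 0)]
  · by_cases h : ∀ s, q s ≠ x <;> simp [h]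
  · intro z hz
    simp [hz.symm]

/-- The truncated expected hitting time `E_y[min(τ_x, T)]`. The truncation spares us summability
considerations. -/
noncomputable def truncatedEhit (P : Matrix V V ℝ) (x : V) (T : ℕ) (y : V) : ℝ :=
  ∑ t ∈ range T, survProb P x y t

lemma truncatedEhit_nonneg (hP : ∀ x y, 0 ≤ P x y) (x : V) (T : ℕ) (y : V) :
    0 ≤ truncatedEhit P x T y :=
  sum_nonneg fun t _ => survProb_nonneg hP x y t

lemma truncatedEhit_self (P : Matrix V V ℝ) (x : V) (T : ℕ) : truncatedEhit P x T x = 0 :=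
  sum_eq_zero fun t _ => survProb_self P x t

lemma truncatedEhit_le_one_add_mulVec (hP : ∀ x y, 0 ≤ P x y) {x y : V} (hyx : y ≠ x) (T : ℕ) :
    truncatedEhit P x T y ≤ 1 + (P *ᵥ truncatedEhit P x T) y := by
  calc truncatedEhit P x T y
      ≤ ∑ t ∈ range (T + 1), survProb P x y t :=
        sum_le_sum_of_subset_of_nonneg (range_mono T.le_succ) fun t _ _ =>
          survProb_nonneg hP x y t
    _ = 1 + ∑ t ∈ range T, (P *ᵥ fun z => survProb P x z t) y := by
        rw [sum_range_succ', survProb_zero P hyx, add_comm]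
        simp only [survProb_succ P hyx]
    _ = 1 + (P *ᵥ truncatedEhit P x T) y := by
        simp only [mulVec, dotProduct, truncatedEhit, mul_sum]
        rw [sum_comm]

end HittingTime

section DirichletForm

variable [Fintype V] {pi : V → ℝ} {P : Matrix V V ℝ}

/-- The Dirichlet form `⟨f, (1 - P) f⟩_π` of a chain with transition matrix `P` and stationary
distribution `π`. -/
noncomputable def dirichletForm (pi : V → ℝ) (P : Matrix V V ℝ) (f : V → ℝ) : ℝ :=
  pip pi f f - pip pi f (P *ᵥ f)

lemma pip_smul_smul (pi : V → ℝ) (a : ℝ) (f g : V → ℝ) :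
    pip pi (a • f) (a • g) = a ^ 2 * pip pi f g := by
  simp only [pip, mul_sum, Pi.smul_apply, smul_eq_mul]
  exact sum_congr rfl fun x _ => by ring

lemma dirichletForm_smul (pi : V → ℝ) (P : Matrix V V ℝ) (a : ℝ) (f : V → ℝ) :
    dirichletForm pi P (a • f) = a ^ 2 * dirichletForm pi P f := by
  simp only [dirichletForm, mulVec_smul, pip_smul_smul, mul_sub]

lemma pip_self_nonneg (hpi : ∀ x, 0 ≤ pi x) (f : V → ℝ) : 0 ≤ pip pi f f :=
  sum_nonneg fun x _ => by
    rw [mul_assoc]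
    exact mul_nonneg (hpi x) (mul_self_nonneg _)

lemma dirichletForm_eq_sum (hP : P *ᵥ 1 = 1) (hstat : pi ᵥ* P = pi) (f : V → ℝ) :
    dirichletForm pi P f = 1 / 2 * ∑ x, ∑ y, pi x * P x y * (f x - f y) ^ 2 := by
  have source : pip pi f f = ∑ x, ∑ y, pi x * P x y * f x ^ 2 := by
    have row_sum (x : V) : ∑ y, P x y = 1 := by simpa [mulVec, dotProduct] using congrFun hP x
    refine sum_congr rfl fun x _ => ?_
    rw [← sum_mul, ← mul_sum, row_sum]
    ring
  have target : pip pi f f = ∑ x, ∑ y, pi x * P x y * f y ^ 2 := by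
    rw [sum_comm]
    refine sum_congr rfl fun y _ => ?_
    rw [← sum_mul, show ∑ x, pi x * P x y = pi y from congrFun hstat y]
    ring
  have cross : pip pi f (P *ᵥ f) = ∑ x, ∑ y, pi x * P x y * (f x * f y) := by
    simp only [pip, mulVec, dotProduct, mul_sum]
    exact sum_congr rfl fun x _ => sum_congr rfl fun y _ => by ring
  have expand : ∑ x, ∑ y, pi x * P x y * (f x - f y) ^ 2
      = ∑ x, ∑ y, pi x * P x y * f x ^ 2 + ∑ x, ∑ y, pi x * P x y * f y ^ 2
        - 2 * ∑ x, ∑ y, pi x * P x y * (f x * f y) := by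
    simp only [mul_sum, ← sum_add_distrib, ← sum_sub_distrib]
    exact sum_congr rfl fun x _ => sum_congr rfl fun y _ => by ring
  rw [dirichletForm, expand, ← source, ← target, ← cross]
  ring

lemma dirichletForm_sub_const (hP : P *ᵥ 1 = 1) (hstat : pi ᵥ* P = pi) (f : V → ℝ) (c : ℝ) :
    dirichletForm pi P (fun x => f x - c) = dirichletForm pi P f := by
  simp only [dirichletForm_eq_sum hP hstat, sub_sub_sub_cancel_right]

lemma vecMul_eq_of_detailed_balance (hP : P *ᵥ 1 = 1)
    (hrev : ∀ x y, pi x * P x y = pi y * P y x) : pi ᵥ* P = pi := by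
  ext y
  have row_sum : ∑ x, P y x = 1 := by simpa [mulVec, dotProduct] using congrFun hP y
  simp only [vecMul, dotProduct, hrev _ y, ← mul_sum, row_sum, mul_one]

lemma dirichletForm_le_of_subsolution (hpi : ∀ x, 0 ≤ pi x) {h : V → ℝ} {x : V} (hx : h x = 0)
    (h0 : ∀ y, 0 ≤ h y) (hsub : ∀ y, y ≠ x → h y ≤ 1 + (P *ᵥ h) y) :
    dirichletForm pi P h ≤ ∑ y, pi y * h y := by
  rw [dirichletForm, pip, pip, ← sum_sub_distrib]
  refine sum_le_sum fun y _ => ?_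
  rcases eq_or_ne y x with rfl | hyx
  · simp [hx]
  · nlinarith [mul_nonneg (mul_nonneg (hpi y) (h0 y)) (sub_nonneg.2 (hsub y hyx))]

lemma le_two_mul_of_subsolution (hP : P *ᵥ 1 = 1) (hpi : pi ∈ stdSimplex ℝ V)
    (hstat : pi ᵥ* P = pi) {K : ℝ} (hK : 0 ≤ K)
    (hsup : ∀ g : V → ℝ, ∑ x, pi x * g x = 0 → ∀ x, g x ^ 2 ≤ K * dirichletForm pi P g)
    {h : V → ℝ} {x : V} (hx : h x = 0) (h0 : ∀ y, 0 ≤ h y)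
    (hsub : ∀ y, y ≠ x → h y ≤ 1 + (P *ᵥ h) y) (y : V) : h y ≤ 2 * K := by
  set c := ∑ z, pi z * h z
  have c_nonneg : 0 ≤ c := sum_nonneg fun z _ => mul_nonneg (hpi.1 z) (h0 z)
  have centred : ∑ z, pi z * (h z - c) = 0 := by
    simp only [mul_sub, sum_sub_distrib, ← sum_mul, hpi.2, one_mul, c, sub_self]
  have deviation (z : V) : (h z - c) ^ 2 ≤ K * c :=
    calc (h z - c) ^ 2 ≤ K * dirichletForm pi P fun z => h z - c := hsup _ centred z
      _ = K * dirichletForm pi P h := by rw [dirichletForm_sub_const hP hstat]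
      _ ≤ K * c := by gcongr; exact dirichletForm_le_of_subsolution hpi.1 hx h0 hsub
  have c_le : c ≤ K := by
    have at_x := deviation x
    rw [hx] at at_x
    nlinarith [c_nonneg]
  have at_y : (h y - c) ^ 2 ≤ K ^ 2 := (deviation y).trans (by nlinarith)
  linarith [abs_le_of_sq_le_sq' at_y hK]

theorem thit_le_two_mul [DecidableEq V] (hP : P ∈ rowStochastic ℝ V) (hpi : pi ∈ stdSimplex ℝ V)
    (hstat : pi ᵥ* P = pi) {K : ℝ} (hK : 0 ≤ K)
    (hsup : ∀ g : V → ℝ, ∑ x, pi x * g x = 0 → ∀ x, g x ^ 2 ≤ K * dirichletForm pi P g) :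
    thit P ≤ 2 * K := by
  refine Real.iSup_le (fun q => ?_) (by positivity)
  refine Real.tsum_le_of_sum_range_le (fun t => survProb_nonneg hP.1 _ _ t) fun T => ?_
  exact le_two_mul_of_subsolution hP.2 hpi hstat hK hsup (truncatedEhit_self P q.1 T)
    (truncatedEhit_nonneg hP.1 q.1 T) (fun _ hy => truncatedEhit_le_one_add_mulVec hP.1 hy T) q.2

end DirichletForm

section SpectralGap

variable [Fintype V] {pi : V → ℝ} {P : Matrix V V ℝ}

lemma isCompact_setOf_pip_self_eq_one (hpi : ∀ x, 0 < pi x) :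
    IsCompact {f : V → ℝ | pip pi f f = 1 ∧ ∑ x, pi x * f x = 0} := by
  have bounded : {f : V → ℝ | pip pi f f = 1 ∧ ∑ x, pi x * f x = 0}
      ⊆ Set.univ.pi fun x => Set.Icc (-√(1 / pi x)) √(1 / pi x) := by
    rintro f ⟨hf, -⟩ x -
    have term_le : pi x * f x * f x ≤ pip pi f f :=
      single_le_sum (f := fun x => pi x * f x * f x)
        (fun y _ => by nlinarith [hpi y, mul_self_nonneg (f y)]) (mem_univ x)
    refine abs_le.1 (Real.abs_le_sqrt ?_)
    rw [le_div_iff₀' (hpi x)]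
    linarith
  refine (isCompact_univ_pi fun x => isCompact_Icc).of_isClosed_subset (.inter ?_ ?_) bounded
  · exact isClosed_eq (by unfold pip; fun_prop) continuous_const
  · exact isClosed_eq (by fun_prop) continuous_const

lemma secondEig_lt_one (hpi : ∀ x, 0 < pi x)
    (hpos : ∀ f : V → ℝ, f ≠ 0 → ∑ x, pi x * f x = 0 → 0 < dirichletForm pi P f) :
    secondEig pi P < 1 := by
  set S := {f : V → ℝ | pip pi f f = 1 ∧ ∑ x, pi x * f x = 0}
  have eq_image : secondEig pi P = sSup ((fun f => pip pi f (P *ᵥ f)) '' S) := by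
    rw [secondEig]
    congr 1
    ext r
    simp only [S, Set.mem_ofPred_eq, Set.mem_image, and_assoc, eq_comm]
  rcases S.eq_empty_or_nonempty with hS | hS
  · simp [eq_image, hS]
  · have cont : Continuous fun f => pip pi f (P *ᵥ f) := by
      unfold pip
      fun_prop
    obtain ⟨f, ⟨hf, hmean⟩, hmax⟩ :=
      (isCompact_setOf_pip_self_eq_one hpi).exists_sSup_image_eq hS cont.continuousOn
    have f_ne : f ≠ 0 := by
      rintro rfl
      simp [pip] at hf
    have := hpos f f_ne hmean
    rw [dirichletForm, hf] at this
    rw [eq_image, hmax]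
    linarith

variable [DecidableEq V]

lemma dirichletForm_nonneg (hP : P ∈ rowStochastic ℝ V) (hpi : ∀ x, 0 ≤ pi x)
    (hstat : pi ᵥ* P = pi) (f : V → ℝ) : 0 ≤ dirichletForm pi P f := by
  rw [dirichletForm_eq_sum hP.2 hstat]
  refine mul_nonneg (by norm_num) (sum_nonneg fun x _ => sum_nonneg fun y _ => ?_)
  exact mul_nonneg (mul_nonneg (hpi x) (hP.1 x y)) (sq_nonneg _)

lemma one_sub_secondEig_mul_pip_self_le (hP : P ∈ rowStochastic ℝ V) (hpi : ∀ x, 0 ≤ pi x)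
    (hstat : pi ᵥ* P = pi) {g : V → ℝ} (hg : ∑ x, pi x * g x = 0) :
    (1 - secondEig pi P) * pip pi g g ≤ dirichletForm pi P g := by
  have form_nonneg := dirichletForm_nonneg hP hpi hstat
  rcases (pip_self_nonneg hpi g).eq_or_lt with h0 | hpos
  · simpa [← h0] using form_nonneg g
  · set a := (√(pip pi g g))⁻¹
    have a_sq : a ^ 2 = (pip pi g g)⁻¹ := by rw [inv_pow, Real.sq_sqrt hpos.le]
    have normalized : pip pi (a • g) (a • g) = 1 := by
      rw [pip_smul_smul, a_sq, inv_mul_cancel₀ hpos.ne']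
    have centred : ∑ x, pi x * (a • g) x = 0 := by
      simp only [Pi.smul_apply, smul_eq_mul, mul_left_comm _ a, ← mul_sum, hg, mul_zero]
    have rayleigh_le : pip pi (a • g) (P *ᵥ (a • g)) ≤ secondEig pi P := by
      refine le_csSup ⟨1, ?_⟩ ⟨a • g, normalized, centred, rfl⟩
      rintro r ⟨f, hf, -, rfl⟩
      have := form_nonneg f
      rw [dirichletForm, hf] at this
      linarith
    have scaled := dirichletForm_smul pi P a g
    rw [dirichletForm, normalized, a_sq] at scaled
    rw [← le_inv_mul_iff₀' hpos]
    linarith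

theorem pip_self_le_trelT_mul_dirichletForm (hP : P ∈ rowStochastic ℝ V) (hpi : ∀ x, 0 ≤ pi x)
    (hstat : pi ᵥ* P = pi) (hgap : secondEig pi P < 1) {g : V → ℝ}
    (hg : ∑ x, pi x * g x = 0) : pip pi g g ≤ trelT pi P * dirichletForm pi P g := by
  rw [trelT, one_div_mul_eq_div, le_div_iff₀' (sub_pos.2 hgap)]
  exact one_sub_secondEig_mul_pip_self_le hP hpi hstat hg

end SpectralGap

section AgmonInequality

lemma abs_mul_abs_sub_mul_abs_le (a b : ℝ) : |(a * |a| - b * |b|)| ≤ |a - b| * (|a| + |b|) := by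
  rcases abs_cases a with ⟨ha, _⟩ | ⟨ha, _⟩ <;> rcases abs_cases b with ⟨hb, _⟩ | ⟨hb, _⟩ <;>
    rcases abs_cases (a - b) with ⟨hab, _⟩ | ⟨hab, _⟩ <;>
    rw [ha, hb, hab, abs_le] <;> constructor <;> nlinarith

lemma sq_le_sum_of_mul_nonpos {a : ℕ → ℝ} {n : ℕ} (h : a 0 * a n ≤ 0) :
    a 0 ^ 2 ≤ ∑ i ∈ range n, |a i - a (i + 1)| * (|a i| + |a (i + 1)|) := by
  have endpoints : a 0 ^ 2 ≤ |(a 0 * |a 0| - a n * |a n|)| := by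
    have opposite : a 0 * a n * (|a 0| * |a n|) ≤ 0 :=
      mul_nonpos_of_nonpos_of_nonneg h (by positivity)
    calc a 0 ^ 2 = |(a 0 * |a 0|)| := by rw [abs_mul, abs_abs, ← sq, sq_abs]
      _ ≤ _ := sq_le_sq.1 (by nlinarith [sq_nonneg (a n * |a n|)])
  calc a 0 ^ 2 ≤ |(a 0 * |a 0| - a n * |a n|)| := endpoints
    _ = |∑ i ∈ range n, (a i * |a i| - a (i + 1) * |a (i + 1)|)| := by
        rw [sum_range_sub' fun i => a i * |a i|]
    _ ≤ ∑ i ∈ range n, |(a i * |a i| - a (i + 1) * |a (i + 1)|)| := abs_sum_le_sum_abs _ _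
    _ ≤ _ := sum_le_sum fun i _ => abs_mul_abs_sub_mul_abs_le _ _

lemma pow_four_le_of_mul_nonpos {a : ℕ → ℝ} {n : ℕ} (h : a 0 * a n ≤ 0) :
    a 0 ^ 4 ≤ 4 * (∑ i ∈ range n, (a i - a (i + 1)) ^ 2) * ∑ i ∈ range (n + 1), a i ^ 2 := by
  have init : ∑ i ∈ range n, a i ^ 2 ≤ ∑ i ∈ range (n + 1), a i ^ 2 := by
    rw [sum_range_succ]
    linarith [sq_nonneg (a n)]
  have tail : ∑ i ∈ range n, a (i + 1) ^ 2 ≤ ∑ i ∈ range (n + 1), a i ^ 2 := by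
    rw [sum_range_succ']
    linarith [sq_nonneg (a 0)]
  calc a 0 ^ 4 = (a 0 ^ 2) ^ 2 := by ring
    _ ≤ (∑ i ∈ range n, |a i - a (i + 1)| * (|a i| + |a (i + 1)|)) ^ 2 := by
        gcongr
        exact sq_le_sum_of_mul_nonpos h
    _ ≤ (∑ i ∈ range n, |a i - a (i + 1)| ^ 2) * ∑ i ∈ range n, (|a i| + |a (i + 1)|) ^ 2 :=
        sum_mul_sq_le_sq_mul_sq _ _ _
    _ ≤ (∑ i ∈ range n, (a i - a (i + 1)) ^ 2)
          * ∑ i ∈ range n, 2 * (a i ^ 2 + a (i + 1) ^ 2) := by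
        simp only [sq_abs]
        gcongr with i
        simpa only [sq_abs] using add_sq_le (a := |a i|) (b := |a (i + 1)|)
    _ = (∑ i ∈ range n, (a i - a (i + 1)) ^ 2)
          * (2 * (∑ i ∈ range n, a i ^ 2 + ∑ i ∈ range n, a (i + 1) ^ 2)) := by
        rw [← mul_sum, sum_add_distrib]
    _ ≤ (∑ i ∈ range n, (a i - a (i + 1)) ^ 2) * (2 * (∑ i ∈ range (n + 1), a i ^ 2
          + ∑ i ∈ range (n + 1), a i ^ 2)) := by gcongr
    _ = _ := by ring

end AgmonInequality

section GraphEnergy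

variable [Fintype V] (G : SimpleGraph V) [DecidableRel G.Adj]

/-- The energy of a function on a graph, each edge being counted in both directions. It is twice
the quadratic form of the Laplacian. -/
noncomputable def graphEnergy (g : V → ℝ) : ℝ :=
  ∑ u, ∑ w ∈ G.neighborFinset u, (g u - g w) ^ 2

lemma graphEnergy_nonneg (g : V → ℝ) : 0 ≤ graphEnergy G g := by
  unfold graphEnergy
  positivity

lemma sum_sum_neighborFinset_le_graphEnergy (g : V → ℝ) (s : Finset V) :
    ∑ u ∈ s, ∑ w ∈ G.neighborFinset u, (g u - g w) ^ 2 ≤ graphEnergy G g :=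
  sum_le_univ_sum_of_nonneg fun _ => by positivity

lemma eq_of_graphEnergy_eq_zero (hconn : G.Connected) {g : V → ℝ} (hg : graphEnergy G g = 0)
    (u w : V) : g u = g w := by
  classical
  refine (G.lapMatrix_toLinearMap₂'_apply'_eq_zero_iff_forall_reachable g).1 ?_ u w
    (hconn.preconnected u w)
  simp only [G.lapMatrix_toLinearMap₂' ℝ, ← sum_filter, ← G.neighborFinset_eq_filter]
  rw [← graphEnergy, hg, zero_div]

lemma minDegree_mul_sum_sq_le (g : V → ℝ) {s : Finset V} {k : ℕ}
    (hs : ∀ w, #{u ∈ s | G.Adj u w} ≤ k) :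
    G.minDegree * ∑ u ∈ s, g u ^ 2 ≤ 2 * (k * ∑ u, g u ^ 2 + graphEnergy G g) := by
  have average (u : V) : G.minDegree * g u ^ 2
      ≤ ∑ w ∈ G.neighborFinset u, 2 * (g w ^ 2 + (g u - g w) ^ 2) := by
    calc G.minDegree * g u ^ 2 ≤ G.degree u * g u ^ 2 := by
          gcongr
          exact G.minDegree_le_degree u
      _ = ∑ w ∈ G.neighborFinset u, (g w + (g u - g w)) ^ 2 := by simp
      _ ≤ _ := sum_le_sum fun w _ => add_sq_le
  have overlap : ∑ u ∈ s, ∑ w ∈ G.neighborFinset u, g w ^ 2 ≤ k * ∑ w, g w ^ 2 := by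
    simp only [G.neighborFinset_eq_filter, sum_filter]
    rw [sum_comm, mul_sum]
    refine sum_le_sum fun w _ => ?_
    rw [← sum_filter, sum_const, nsmul_eq_mul]
    gcongr
    exact hs w
  calc G.minDegree * ∑ u ∈ s, g u ^ 2
      ≤ ∑ u ∈ s, ∑ w ∈ G.neighborFinset u, 2 * (g w ^ 2 + (g u - g w) ^ 2) := by
        rw [mul_sum]
        exact sum_le_sum fun u _ => average u
    _ = 2 * (∑ u ∈ s, ∑ w ∈ G.neighborFinset u, g w ^ 2
          + ∑ u ∈ s, ∑ w ∈ G.neighborFinset u, (g u - g w) ^ 2) := by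
        simp only [← mul_sum, sum_add_distrib]
    _ ≤ _ := by
        gcongr
        exact sum_sum_neighborFinset_le_graphEnergy G g s

lemma minDegree_mul_sq_le (g : V → ℝ) (x : V) :
    G.minDegree * g x ^ 2 ≤ 2 * (∑ u, g u ^ 2 + graphEnergy G g) := by
  simpa using minDegree_mul_sum_sq_le G g (s := {x}) (k := 1) fun w => card_filter_le _ _

end GraphEnergy

section Geodesic

variable {G : SimpleGraph V} {x z : V} {p : G.Walk x z}

lemma dist_getVert_of_length_eq_dist (hconn : G.Connected) (hp : p.length = G.dist x z) {i : ℕ}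
    (hi : i ≤ p.length) : G.dist x (p.getVert i) = i := by
  have from_start := SimpleGraph.dist_le (p.take i)
  have to_end := SimpleGraph.dist_le (p.drop i)
  have triangle := hconn.dist_triangle (u := x) (v := p.getVert i) (w := z)
  rw [SimpleGraph.Walk.take_length] at from_start
  rw [SimpleGraph.Walk.drop_length] at to_end
  lia

lemma getVert_injOn_range (hp : p.IsPath) : Set.InjOn p.getVert (range (p.length + 1)) :=
  hp.getVert_injOn.mono fun i hi => by simpa [Nat.lt_succ_iff] using hi

lemma card_adj_image_getVert_le_three [DecidableEq V] [DecidableRel G.Adj] (hconn : G.Connected)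
    (hp : p.length = G.dist x z) (w : V) :
    #{u ∈ (range (p.length + 1)).image p.getVert | G.Adj u w} ≤ 3 := by
  have near : {u ∈ (range (p.length + 1)).image p.getVert | G.Adj u w}
      ⊆ (Icc (G.dist x w - 1) (G.dist x w + 1)).image p.getVert := by
    intro u hu
    simp only [mem_filter, mem_image, mem_range, Nat.lt_succ_iff] at hu
    obtain ⟨⟨i, hi, rfl⟩, hadj⟩ := hu
    refine mem_image_of_mem _ (mem_Icc.2 ?_)
    have := hadj.diff_dist_adj (u := x)
    rw [dist_getVert_of_length_eq_dist hconn hp hi] at this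
    lia
  refine (card_le_card near).trans (card_image_le.trans ?_)
  rw [Nat.card_Icc]
  lia

variable [Fintype V] [DecidableRel G.Adj]

lemma sum_sq_sub_getVert_le_graphEnergy (hp : p.IsPath) (g : V → ℝ) :
    ∑ i ∈ range p.length, (g (p.getVert i) - g (p.getVert (i + 1))) ^ 2 ≤ graphEnergy G g := by
  classical
  have injOn : Set.InjOn p.getVert (range p.length) :=
    (getVert_injOn_range hp).mono (by simp)
  calc ∑ i ∈ range p.length, (g (p.getVert i) - g (p.getVert (i + 1))) ^ 2
      ≤ ∑ i ∈ range p.length,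
          ∑ w ∈ G.neighborFinset (p.getVert i), (g (p.getVert i) - g w) ^ 2 :=
        sum_le_sum fun i hi => single_le_sum
          (f := fun w => (g (p.getVert i) - g w) ^ 2) (fun _ _ => sq_nonneg _)
          ((G.mem_neighborFinset _ _).2 (p.adj_getVert_succ (mem_range.1 hi)))
    _ = ∑ u ∈ (range p.length).image p.getVert, ∑ w ∈ G.neighborFinset u, (g u - g w) ^ 2 :=
        (sum_image (f := fun u => ∑ w ∈ G.neighborFinset u, (g u - g w) ^ 2) injOn).symm
    _ ≤ graphEnergy G g := sum_sum_neighborFinset_le_graphEnergy G g _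

theorem minDegree_mul_pow_four_le (hconn : G.Connected) {g : V → ℝ} (hxz : g x * g z ≤ 0) :
    G.minDegree * g x ^ 4 ≤ 8 * graphEnergy G g * (3 * ∑ u, g u ^ 2 + graphEnergy G g) := by
  classical
  obtain ⟨p, hpath, hp⟩ := hconn.exists_path_of_dist x z
  have agmon : g x ^ 4 ≤ 4 * graphEnergy G g * ∑ i ∈ range (p.length + 1), g (p.getVert i) ^ 2 := by
    have := pow_four_le_of_mul_nonpos (a := fun i => g (p.getVert i)) (n := p.length) (by simpa)
    simp only [SimpleGraph.Walk.getVert_zero] at this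
    refine this.trans ?_
    gcongr
    exact sum_sq_sub_getVert_le_graphEnergy hpath g
  have along_path : G.minDegree * ∑ i ∈ range (p.length + 1), g (p.getVert i) ^ 2
      ≤ 2 * (3 * ∑ u, g u ^ 2 + graphEnergy G g) := by
    rw [← sum_image (f := fun u => g u ^ 2) (getVert_injOn_range hpath)]
    exact mod_cast minDegree_mul_sum_sq_le G g (card_adj_image_getVert_le_three hconn hp)
  have := graphEnergy_nonneg G g
  calc G.minDegree * g x ^ 4
      ≤ G.minDegree * (4 * graphEnergy G g * ∑ i ∈ range (p.length + 1), g (p.getVert i) ^ 2) := by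
        gcongr
    _ = 4 * graphEnergy G g
          * (G.minDegree * ∑ i ∈ range (p.length + 1), g (p.getVert i) ^ 2) := by ring
    _ ≤ 4 * graphEnergy G g * (2 * (3 * ∑ u, g u ^ 2 + graphEnergy G g)) := by gcongr
    _ = _ := by ring

end Geodesic

section LazyWalk

variable [Fintype V]

lemma exists_mul_nonpos_of_sum_mul_eq_zero {pi : V → ℝ} (hpi : ∀ x, 0 < pi x) {g : V → ℝ}
    (hg : ∑ x, pi x * g x = 0) (x : V) : ∃ z, g x * g z ≤ 0 := by
  by_contra! same_sign
  have : 0 < ∑ z, pi z * (g x * g z) :=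
    sum_pos (fun z _ => mul_pos (hpi z) (same_sign z)) ⟨x, mem_univ x⟩
  simp only [mul_left_comm _ (g x), ← mul_sum, hg, mul_zero, lt_irrefl] at this

variable (G : SimpleGraph V) [DecidableRel G.Adj]

lemma sum_degree_pos [Nonempty V] (hdeg : ∀ v, 0 < G.degree v) : 0 < ∑ v, (G.degree v : ℝ) :=
  sum_pos (fun v _ => Nat.cast_pos.2 (hdeg v)) univ_nonempty

variable [DecidableEq V]

lemma lazyPi_mul_lazyP_of_adj {x y : V} (hxy : G.Adj x y) :
    lazyPi G x * lazyP G x y = 1 / (2 * ∑ v, (G.degree v : ℝ)) := by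
  have : (G.degree x : ℝ) ≠ 0 := by
    exact_mod_cast ((G.degree_pos_iff_exists_adj x).2 ⟨y, hxy⟩).ne'
  simp only [lazyPi, lazyP, of_apply, hxy.ne, hxy, if_true, if_false]
  field_simp

lemma lazyPi_mul_lazyP_comm (x y : V) :
    lazyPi G x * lazyP G x y = lazyPi G y * lazyP G y x := by
  by_cases hxy : G.Adj x y
  · rw [lazyPi_mul_lazyP_of_adj G hxy, lazyPi_mul_lazyP_of_adj G hxy.symm]
  · rcases eq_or_ne x y with rfl | hne
    · rfl
    · simp [lazyP, hne, hne.symm, hxy, G.adj_comm y x]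

lemma lazyP_mem_rowStochastic (hdeg : ∀ v, 0 < G.degree v) : lazyP G ∈ rowStochastic ℝ V := by
  refine mem_rowStochastic_iff_sum.2 ⟨fun x y => ?_, fun x => ?_⟩
  · simp only [lazyP, of_apply]
    split_ifs <;> positivity
  · have hx : (G.degree x : ℝ) ≠ 0 := by exact_mod_cast (hdeg x).ne'
    have split_diagonal (y : V) : lazyP G x y
        = (if x = y then 1 / 2 else 0) + if G.Adj x y then 1 / (2 * (G.degree x : ℝ)) else 0 := by
      rcases eq_or_ne x y with rfl | hne
      · simp [lazyP]
      · simp [lazyP, hne]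
    simp only [split_diagonal, sum_add_distrib, sum_ite_eq, mem_univ, if_true, ← sum_filter,
      ← G.neighborFinset_eq_filter, sum_const, G.card_neighborFinset_eq_degree, nsmul_eq_mul]
    field_simp
    norm_num

lemma lazyPi_vecMul_lazyP (hdeg : ∀ v, 0 < G.degree v) : lazyPi G ᵥ* lazyP G = lazyPi G :=
  vecMul_eq_of_detailed_balance (lazyP_mem_rowStochastic G hdeg).2 (lazyPi_mul_lazyP_comm G)

lemma lazyPi_pos (hdeg : ∀ v, 0 < G.degree v) (x : V) : 0 < lazyPi G x :=
  have : Nonempty V := ⟨x⟩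
  div_pos (Nat.cast_pos.2 (hdeg x)) (sum_degree_pos G hdeg)

lemma lazyPi_mem_stdSimplex [Nonempty V] (hdeg : ∀ v, 0 < G.degree v) :
    lazyPi G ∈ stdSimplex ℝ V := by
  refine ⟨fun x => (lazyPi_pos G hdeg x).le, ?_⟩
  simp only [lazyPi, ← sum_div, div_self (sum_degree_pos G hdeg).ne']

lemma dirichletForm_lazyP (hdeg : ∀ v, 0 < G.degree v) (g : V → ℝ) :
    dirichletForm (lazyPi G) (lazyP G) g = graphEnergy G g / (4 * ∑ v, (G.degree v : ℝ)) := by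
  have jump (x y : V) : lazyPi G x * lazyP G x y * (g x - g y) ^ 2
      = if G.Adj x y then (g x - g y) ^ 2 / (2 * ∑ v, (G.degree v : ℝ)) else 0 := by
    by_cases hxy : G.Adj x y
    · rw [lazyPi_mul_lazyP_of_adj G hxy, if_pos hxy]
      ring
    · rcases eq_or_ne x y with rfl | hne
      · simp
      · simp [lazyP, hne, hxy]
  rw [dirichletForm_eq_sum (lazyP_mem_rowStochastic G hdeg).2 (lazyPi_vecMul_lazyP G hdeg)]
  simp only [jump, ← sum_filter, ← G.neighborFinset_eq_filter, ← sum_div]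
  rw [← graphEnergy]
  ring

lemma secondEig_lazyP_lt_one (hconn : G.Connected) (hdeg : ∀ v, 0 < G.degree v) :
    secondEig (lazyPi G) (lazyP G) < 1 := by
  have := hconn.nonempty
  refine secondEig_lt_one (lazyPi_pos G hdeg) fun f hf hmean => ?_
  rw [dirichletForm_lazyP G hdeg]
  refine div_pos ((graphEnergy_nonneg G f).lt_of_ne' fun h0 => hf (funext fun x => ?_))
    (mul_pos four_pos (sum_degree_pos G hdeg))
  simpa [eq_of_graphEnergy_eq_zero G hconn h0 _ x, ← sum_mul,
    (lazyPi_mem_stdSimplex G hdeg).2] using hmean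

lemma trelT_lazyP_nonneg (hconn : G.Connected) (hdeg : ∀ v, 0 < G.degree v) :
    0 ≤ trelT (lazyPi G) (lazyP G) :=
  one_div_nonneg.2 (sub_nonneg.2 (secondEig_lazyP_lt_one G hconn hdeg).le)

lemma minDegree_mul_sum_sq_le_trelT_mul (hconn : G.Connected) (hdeg : ∀ v, 0 < G.degree v)
    {g : V → ℝ} (hg : ∑ x, lazyPi G x * g x = 0) :
    4 * G.minDegree * ∑ x, g x ^ 2 ≤ trelT (lazyPi G) (lazyP G) * graphEnergy G g := by
  have := hconn.nonempty
  have hm := sum_degree_pos G hdeg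
  have poincare := pip_self_le_trelT_mul_dirichletForm (lazyP_mem_rowStochastic G hdeg)
    (fun x => (lazyPi_pos G hdeg x).le) (lazyPi_vecMul_lazyP G hdeg)
    (secondEig_lazyP_lt_one G hconn hdeg) hg
  have norm_sq : G.minDegree * ∑ x, g x ^ 2
      ≤ (∑ v, (G.degree v : ℝ)) * pip (lazyPi G) g g := by
    rw [pip, mul_sum, mul_sum]
    refine sum_le_sum fun x _ => ?_
    rw [lazyPi, mul_assoc, ← sq, ← mul_assoc, mul_div_cancel₀ _ hm.ne']
    gcongr
    exact G.minDegree_le_degree x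
  rw [dirichletForm_lazyP G hdeg, ← mul_div_assoc, le_div_iff₀ (by positivity)] at poincare
  linarith

-- With `q = g(x)²` and `s = √(t_rel + 1)`, the pointwise bound suffices when `s ≤ 4 d` and the
-- Agmon bound when `4 d ≤ s`.
lemma mul_le_of_pointwise_of_agmon {s d q S Q : ℝ} (hs : 1 ≤ s) (hd : 1 ≤ d) (hQ : 0 ≤ Q)
    (poincare : 4 * d * S ≤ (s ^ 2 - 1) * Q) (pointwise : d * q ≤ 2 * (S + Q))
    (agmon : d * q ^ 2 ≤ 8 * Q * (3 * S + Q)) : d * q ≤ 5 / 2 * s * Q := by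
  have hd0 : 0 < d := by linarith
  rcases le_total s (4 * d) with hsd | hsd
  · refine le_of_mul_le_mul_left ?_ hd0
    have coeff : (s ^ 2 - 1) / 2 + 2 * d ≤ 5 / 2 * s * d := by nlinarith
    calc d * (d * q) ≤ d * (2 * (S + Q)) := by gcongr
      _ ≤ ((s ^ 2 - 1) / 2 + 2 * d) * Q := by linarith
      _ ≤ 5 / 2 * s * d * Q := by gcongr
      _ = _ := by ring
  · refine le_of_sq_le_sq ?_ (by positivity)
    have coeff : 6 * (s ^ 2 - 1) + 8 * d ≤ (5 / 2 * s) ^ 2 := by nlinarith [sq_nonneg (s / 2 - 2)]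
    calc (d * q) ^ 2 = d * (d * q ^ 2) := by ring
      _ ≤ d * (8 * Q * (3 * S + Q)) := by gcongr
      _ = Q * (6 * (4 * d * S) + 8 * d * Q) := by ring
      _ ≤ Q * (6 * ((s ^ 2 - 1) * Q) + 8 * d * Q) := by gcongr
      _ = (6 * (s ^ 2 - 1) + 8 * d) * Q ^ 2 := by ring
      _ ≤ (5 / 2 * s) ^ 2 * Q ^ 2 := by gcongr
      _ = _ := by ring

theorem minDegree_mul_sq_le_sqrt_trelT_mul [Nontrivial V] (hconn : G.Connected) {g : V → ℝ}
    (hg : ∑ x, lazyPi G x * g x = 0) (x : V) :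
    G.minDegree * g x ^ 2
      ≤ 5 / 2 * √(trelT (lazyPi G) (lazyP G) + 1) * graphEnergy G g := by
  have hdeg (v : V) : 0 < G.degree v := hconn.preconnected.degree_pos_of_nontrivial v
  have ht := trelT_lazyP_nonneg G hconn hdeg
  obtain ⟨z, hxz⟩ := exists_mul_nonpos_of_sum_mul_eq_zero (lazyPi_pos G hdeg) hg x
  refine mul_le_of_pointwise_of_agmon (S := ∑ u, g u ^ 2) (Real.one_le_sqrt.2 (by linarith))
    (Nat.one_le_cast.2 hconn.preconnected.minDegree_pos_of_nontrivial) (graphEnergy_nonneg G g)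
    ?_ (minDegree_mul_sq_le G g x) ?_
  · rw [Real.sq_sqrt (by linarith), add_sub_cancel_right]
    exact minDegree_mul_sum_sq_le_trelT_mul G hconn hdeg hg
  · rw [← pow_mul]
    exact minDegree_mul_pow_four_le hconn hxz

theorem thit_lazyP_le [Nontrivial V] (hconn : G.Connected) :
    thit (lazyP G) ≤ 20 * (∑ v, (G.degree v : ℝ)) / G.minDegree
      * √(trelT (lazyPi G) (lazyP G) + 1) := by
  have hdeg (v : V) : 0 < G.degree v := hconn.preconnected.degree_pos_of_nontrivial v
  have hm := sum_degree_pos G hdeg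
  have hd : (0 : ℝ) < G.minDegree :=
    Nat.cast_pos.2 hconn.preconnected.minDegree_pos_of_nontrivial
  set m := ∑ v, (G.degree v : ℝ) with m_def
  set s := √(trelT (lazyPi G) (lazyP G) + 1)
  calc thit (lazyP G) ≤ 2 * (10 * m / G.minDegree * s) := by
        refine thit_le_two_mul (lazyP_mem_rowStochastic G hdeg) (lazyPi_mem_stdSimplex G hdeg)
          (lazyPi_vecMul_lazyP G hdeg) (by positivity) fun g hg x => ?_
        calc g x ^ 2 ≤ 5 / 2 * s * graphEnergy G g / G.minDegree :=
              (le_div_iff₀' hd).2 (minDegree_mul_sq_le_sqrt_trelT_mul G hconn hg x)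
          _ = 10 * m / G.minDegree * s * dirichletForm (lazyPi G) (lazyP G) g := by
              rw [dirichletForm_lazyP G hdeg, ← m_def]
              field_simp
              ring
    _ = 20 * m / G.minDegree * s := by ring

lemma dminR_eq_minDegree [Nonempty V] : dminR G = G.minDegree := by
  obtain ⟨v, hv⟩ := G.exists_minimal_degree_vertex
  refine le_antisymm ?_ (le_inf' _ _ fun u _ => Nat.cast_le.2 (G.minDegree_le_degree u))
  rw [hv]
  exact inf'_le _ (mem_univ v)

lemma davgR_mul_card [Nonempty V] : davgR G * Fintype.card V = ∑ v, (G.degree v : ℝ) :=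
  div_mul_cancel₀ _ (Nat.cast_ne_zero.2 Fintype.card_ne_zero)

end LazyWalk

theorem stmt18 [Fintype V] [Nonempty V] [DecidableEq V] (G : SimpleGraph V)
    [DecidableRel G.Adj] (hconn : G.Connected) (hcard : 2 ≤ Fintype.card V) :
    thit (lazyP G) ≤ 20 * (davgR G / dminR G) * (Fintype.card V : ℝ) *
      Real.sqrt (trelT (lazyPi G) (lazyP G) + 1) := by
  have : Nontrivial V := Fintype.one_lt_card_iff_nontrivial.1 hcard
  calc thit (lazyP G)
      ≤ 20 * (∑ v, (G.degree v : ℝ)) / G.minDegree * √(trelT (lazyPi G) (lazyP G) + 1) :=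
        thit_lazyP_le G hconn
    _ = 20 * (davgR G / dminR G) * Fintype.card V * √(trelT (lazyPi G) (lazyP G) + 1) := by
        rw [← davgR_mul_card, dminR_eq_minDegree]
        ring
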